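/- Let 0 < φ < 1, let f be the density of an absolutely continuous nonnegative random variable Z with distribution function F satisfying F(0) = 0, let v : [0,∞) → ℝ be locally bounded, and let m be the locally bounded solution of the defective renewal equation m(u) = φ ∫₀^u m(u−y) f(y) dy + v(u) for u ≥ 0. Assume F and v belong to C²₀([0,∞)). Then m belongs to C²₀([0,∞)), m(0) = v(0), for all u > 0 one has m'(u) = φ ( ∫₀^u m(u−y) f'(y) dy + m(u) f(0) ) + v'(u), and lim_{u↓0} m'(u) = φ v(0) f(0) + v'(0). -/

import Mathlib

open MeasureTheory Filter Topology

lemma ext_C1 (h h' : ℝ → ℝ) (hc : ContinuousOn h (Set.Ici 0))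
    (hd : ∀ u, 0 < u → HasDerivAt h (h' u) u) (hc' : ContinuousOn h' (Set.Ioi 0)) (L : ℝ)
    (hl : Tendsto h' (𝓝[>] (0:ℝ)) (𝓝 L)) :
    ∃ k k' : ℝ → ℝ, Continuous k' ∧ (∀ u, HasDerivAt k (k' u) u) ∧ (∀ u, 0 ≤ u → k u = h u) ∧
      (∀ u, 0 < u → k' u = h' u) ∧ k' 0 = L := by
  let k' : ℝ → ℝ := fun u => if u ≤ 0 then L else h' u
  have hpos : ∀ u, 0 < u → k' u = h' u := fun u hu => if_neg (not_le.2 hu)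
  have h0 : k' 0 = L := if_pos le_rfl
  have hk' : Continuous k' := by
    rw [continuous_iff_continuousAt]
    intro u
    rcases lt_trichotomy u 0 with hu | rfl | hu
    · have : k' =ᶠ[𝓝 u] fun _ => L := by
        filter_upwards [Iio_mem_nhds hu] with x hx
        exact if_pos (le_of_lt hx)
      exact (continuousAt_const.congr this.symm)
    · rw [continuousAt_iff_continuous_left'_right']
      constructor
      · refine (continuousWithinAt_const (b := L)).congr (fun x hx => if_pos (le_of_lt hx)) h0
      · unfold ContinuousWithinAt
        rw [h0]
        refine hl.congr' ?_
        filter_upwards [self_mem_nhdsWithin] with x hx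
        exact (hpos x hx).symm
    · have : k' =ᶠ[𝓝 u] h' := by
        filter_upwards [Ioi_mem_nhds hu] with x hx
        exact hpos x hx
      exact ((hc'.continuousAt (Ioi_mem_nhds hu)).congr this.symm)
  refine ⟨fun u => h 0 + ∫ t in (0:ℝ)..u, k' t, k', hk', ?_, ?_, hpos, h0⟩
  · intro u
    exact (intervalIntegral.integral_hasDerivAt_right (hk'.intervalIntegrable _ _)
      (hk'.stronglyMeasurableAtFilter _ _) hk'.continuousAt).const_add _
  · intro u hu
    have := intervalIntegral.integral_eq_sub_of_hasDerivAt_of_le hu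
      (hc.mono Set.Icc_subset_Ici_self) (f' := k')
      (fun x hx => by rw [hpos x hx.1]; exact hd x hx.1) (hk'.intervalIntegrable _ _)
    simp only [this]; ring

lemma leibniz_diag (p : ℝ → ℝ → ℝ) (hp : Continuous (Function.uncurry p)) (u0 : ℝ) :
    HasDerivAt (fun u => ∫ t in u0..u, p u t) (p u0 u0) u0 := by
  rw [hasDerivAt_iff_isLittleO, Asymptotics.isLittleO_iff]
  intro ε hε
  have := Metric.continuousAt_iff.1 (hp.continuousAt (x := (u0, u0))) ε hε
  obtain ⟨δ, hδ, H⟩ := this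
  filter_upwards [Metric.ball_mem_nhds u0 hδ] with u hu
  have hpu : Continuous (p u) := by fun_prop
  have e : (∫ t in u0..u, p u t) - (∫ t in u0..u0, p u0 t) - (u - u0) • p u0 u0
      = ∫ t in u0..u, (p u t - p u0 u0) := by
    rw [intervalIntegral.integral_sub (hpu.intervalIntegrable _ _) (by simp)]
    simp
  rw [e, Real.norm_eq_abs (u - u0)]
  apply intervalIntegral.norm_integral_le_of_norm_le_const
  intro t ht
  have hu' : |u - u0| < δ := by simpa [Real.dist_eq] using hu
  have ht' : |t - u0| ≤ |u - u0| := by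
    have := Set.uIoc_subset_uIcc ht
    exact Set.abs_sub_left_of_mem_uIcc this
  have := @H (u, t) (by rw [Prod.dist_eq]; simp [Real.dist_eq]; exact ⟨hu', by linarith⟩)
  simpa [Real.dist_eq, Function.uncurry] using this.le

lemma leibniz_conv (g k k' : ℝ → ℝ) (hg : Continuous g) (hk' : Continuous k')
    (hk : ∀ u, HasDerivAt k (k' u) u) (u0 : ℝ) :
    HasDerivAt (fun u => ∫ t in (0:ℝ)..u, g t * k (u - t))
      (g u0 * k 0 + ∫ t in (0:ℝ)..u0, g t * k' (u0 - t)) u0 := by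
  have hkc : Continuous k := continuous_iff_continuousAt.2 fun u => (hk u).continuousAt
  have h1 := leibniz_diag (fun u t => g t * k (u - t)) (by fun_prop) u0
  have hcomp : IsCompact (Metric.closedBall u0 1 ×ˢ Set.uIcc 0 u0) :=
    (isCompact_closedBall _ _).prod isCompact_uIcc
  obtain ⟨C, hC⟩ := hcomp.exists_bound_of_continuousOn
    (f := fun q : ℝ × ℝ => g q.2 * k' (q.1 - q.2)) (by fun_prop)
  have h2 := (intervalIntegral.hasDerivAt_integral_of_dominated_loc_of_deriv_le (μ := volume)
    (F := fun u t => g t * k (u - t)) (F' := fun u t => g t * k' (u - t)) (x₀ := u0)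
    (a := 0) (b := u0) (bound := fun _ => C)
    (Metric.closedBall_mem_nhds u0 one_pos)
    (Eventually.of_forall fun u => Continuous.aestronglyMeasurable (by fun_prop))
    (Continuous.intervalIntegrable (by fun_prop) _ _)
    (Continuous.aestronglyMeasurable (by fun_prop))
    (Eventually.of_forall fun t ht x hx => hC (x, t) ⟨hx, Set.uIoc_subset_uIcc ht⟩)
    (by simp)
    (Eventually.of_forall fun t ht x hx => by
      simpa using ((hk (x - t)).comp_sub_const x t).const_mul (g t))).2
  have h3 := h1.add h2
  simp only [sub_self] at h3
  refine h3.congr_of_eventuallyEq (Eventually.of_forall fun u => ?_)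
  have hcu : Continuous fun t => g t * k (u - t) := by fun_prop
  simp only [Pi.add_apply]
  rw [add_comm, intervalIntegral.integral_add_adjacent_intervals
    (hcu.intervalIntegrable _ _) (hcu.intervalIntegrable _ _)]

lemma cont_conv_aux (g k : ℝ → ℝ) (hk : Continuous k) 
    (hgm : AEStronglyMeasurable g (volume.restrict (Set.Ioi 0)))
    (hg : ∀ x : ℝ, 0 < x → ∃ M, ∀ u ∈ Set.Icc (0:ℝ) x, |g u| ≤ M) :
    ContinuousOn (fun u => ∫ t in (0:ℝ)..u, g t * k (u - t)) (Set.Ici 0) := by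
  intro u0 hu0
  have hu0 : (0:ℝ) ≤ u0 := hu0
  set R := u0 + 1 with hR
  obtain ⟨M, hM⟩ := hg R (by linarith)
  obtain ⟨C, hC⟩ := (isCompact_Icc (a := -R) (b := R)).exists_bound_of_continuousOn hk.continuousOn
  let k1 : ℝ → ℝ := (Set.Ioi 0).indicator k
  have hk1m : Measurable k1 := hk.measurable.indicator measurableSet_Ioi
  have hC1 : ∀ x ∈ Set.Icc (-R) R, ‖k1 x‖ ≤ C := fun x hx =>
    (norm_indicator_le_norm_self k x).trans (hC x hx)
  have hC0 : 0 ≤ C := (norm_nonneg _).trans (hC 0 ⟨by linarith, by linarith⟩)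
  have hM0 : 0 ≤ M := (abs_nonneg _).trans (hM 0 ⟨by linarith, by linarith⟩)
  have key : ContinuousAt (fun u => ∫ t in (0:ℝ)..R, g t * k1 (u - t)) u0 := by
    apply intervalIntegral.continuousAt_of_dominated_interval (bound := fun _ => M * C)
    · refine Eventually.of_forall fun u => ?_
      rw [Set.uIoc_of_le (by linarith)]
      refine AEStronglyMeasurable.mul (hgm.mono_measure
        (Measure.restrict_mono Set.Ioc_subset_Ioi_self le_rfl)) ?_
      exact (hk1m.comp (measurable_const.sub measurable_id)).aestronglyMeasurable
    · have : Set.Ioo (u0 - 1) (u0 + 1) ∈ 𝓝 u0 := Ioo_mem_nhds (by linarith) (by linarith)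
      filter_upwards [this] with u hu
      refine Eventually.of_forall fun t ht => ?_
      rw [Set.uIoc_of_le (by linarith)] at ht
      rw [norm_mul]
      by_cases hut : u - t ≤ 0
      · have : k1 (u - t) = 0 := Set.indicator_of_notMem (by simpa using hut) _
        rw [this]; simp; positivity
      · refine mul_le_mul (hM t ⟨ht.1.le, ht.2⟩) (hC1 _ ⟨?_, ?_⟩) (norm_nonneg _) hM0
        · linarith
        · linarith [hu.2, ht.1]
    · simp
    · have : ∀ᵐ t : ℝ, t ≠ u0 := by simp [ae_iff]
      filter_upwards [this] with t ht _
      have : ContinuousAt k1 (u0 - t) := by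
        rcases lt_or_gt_of_ne ht with h | h
        · refine hk.continuousAt.congr ?_
          filter_upwards [Ioi_mem_nhds (sub_pos.2 h)] with x hx
          exact (Set.indicator_of_mem hx _).symm
        · refine (continuousAt_const (y := (0:ℝ))).congr ?_
          filter_upwards [Iio_mem_nhds (sub_neg.2 h)] with x hx
          exact (Set.indicator_of_notMem (by simpa using le_of_lt hx) _).symm
      have h2 : ContinuousAt (fun u => k1 (u - t)) u0 :=
        ContinuousAt.comp (f := fun u : ℝ => u - t) this (by fun_prop)
      exact continuousAt_const.mul h2
  refine key.continuousWithinAt.congr_of_eventuallyEq_of_mem ?_ hu0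
  have : Set.Iio R ∈ 𝓝[Set.Ici 0] u0 := mem_nhdsWithin_of_mem_nhds (Iio_mem_nhds (by linarith))
  filter_upwards [this, self_mem_nhdsWithin] with u hu hu'
  have hu : u < R := hu
  have hu' : 0 ≤ u := hu'
  rw [intervalIntegral.integral_of_le hu', intervalIntegral.integral_of_le (by linarith)]
  symm
  rw [← integral_indicator measurableSet_Ioc, ← integral_indicator measurableSet_Ioc]
  apply integral_congr_ae
  have : ∀ᵐ t : ℝ, t ≠ u := by simp [ae_iff]
  filter_upwards [this] with t ht
  by_cases h0 : 0 < t
  · rcases lt_or_gt_of_ne ht with h | h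
    · rw [Set.indicator_of_mem (show t ∈ Set.Ioc 0 R from ⟨h0, by linarith⟩),
        Set.indicator_of_mem (show t ∈ Set.Ioc 0 u from ⟨h0, h.le⟩)]
      congr 1
      exact Set.indicator_of_mem (by simpa using h) _
    · rw [Set.indicator_of_notMem (s := Set.Ioc 0 u) (fun hh => by linarith [hh.2])]
      apply Set.indicator_apply_eq_zero.2
      intro _
      have : k1 (u - t) = 0 := Set.indicator_of_notMem (by simpa using h.le) _
      rw [this, mul_zero]
  · rw [Set.indicator_of_notMem (fun hh : t ∈ Set.Ioc 0 R => h0 hh.1),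
      Set.indicator_of_notMem (fun hh : t ∈ Set.Ioc 0 u => h0 hh.1)]

lemma meas_m (φ : ℝ) (k v m : ℝ → ℝ) (hk : Continuous k) (hv : ContinuousOn v (Set.Ici 0))
    (hm_loc : ∀ x : ℝ, 0 < x → ∃ M, ∀ u ∈ Set.Icc (0:ℝ) x, |m u| ≤ M)
    (hm_eq : ∀ u : ℝ, 0 ≤ u →
      m u = φ * (∫ y in (0:ℝ)..u, m (u - y) * k y) + v u) :
    AEStronglyMeasurable m (volume.restrict (Set.Ioi 0)) := by
  let G : Set ℝ := {u | 0 < u ∧ IntervalIntegrable (fun y => m (u - y) * k y) volume 0 u}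
  let W : ℝ → Set ℝ := fun u => {t | 0 < t ∧ t < u ∧ k (u - t) ≠ 0}
  have hWo : ∀ u, IsOpen (W u) := fun u =>
    (isOpen_lt continuous_const continuous_id).inter
      ((isOpen_lt continuous_id continuous_const).inter
        (isOpen_ne_fun (by fun_prop) continuous_const))
  have hGW : ∀ u ∈ G, AEStronglyMeasurable m (volume.restrict (W u)) := by
    rintro u ⟨hu, hi⟩
    have h1 : AEStronglyMeasurable (fun y => m (u - y) * k y) (volume.restrict (Set.Ioc 0 u)) :=
      hi.1.aestronglyMeasurable
    let S : Set ℝ := {y | 0 < y ∧ y < u ∧ k y ≠ 0}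
    have hSo : IsOpen S := (isOpen_lt continuous_const continuous_id).inter
      ((isOpen_lt continuous_id continuous_const).inter (isOpen_ne_fun hk continuous_const))
    have hS : S ⊆ Set.Ioc 0 u := fun y hy => ⟨hy.1, hy.2.1.le⟩
    have h2 : AEStronglyMeasurable (fun y => m (u - y)) (volume.restrict S) := by
      have h3 := (h1.mono_measure (Measure.restrict_mono hS le_rfl)).mul
        ((hk.measurable.inv).aestronglyMeasurable (μ := volume.restrict S))
      refine h3.congr ?_
      filter_upwards [ae_restrict_mem hSo.measurableSet] with y hy
      simp only [Pi.mul_apply, Pi.inv_apply]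
      rw [mul_assoc, mul_inv_cancel₀ hy.2.2, mul_one]
    have hmp := (Measure.measurePreserving_sub_left volume u).restrict_preimage hSo.measurableSet
    have h4 := h2.comp_measurePreserving hmp
    have e : (fun x => u - x) ⁻¹' S = W u := by
      ext t
      simp only [S, W, Set.mem_preimage, Set.mem_setOf_eq]
      constructor
      · rintro ⟨a, b, c⟩; exact ⟨by linarith, by linarith, c⟩
      · rintro ⟨a, b, c⟩; exact ⟨by linarith, by linarith, c⟩
    rw [e] at h4
    refine h4.congr (Eventually.of_forall fun t => ?_)
    simp
  let O : Set ℝ := ⋃ u ∈ G, W u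
  have hOo : IsOpen O := isOpen_biUnion fun u _ => hWo u
  have hOm : AEStronglyMeasurable m (volume.restrict O) := by
    obtain ⟨T, hTG, hTc, hT⟩ := TopologicalSpace.isOpen_biUnion_countable G W fun u _ => hWo u
    have : O = ⋃ u ∈ T, W u := hT.symm
    rw [this, Set.biUnion_eq_iUnion]
    have := hTc.to_subtype
    exact aestronglyMeasurable_iUnion_iff.2 fun i => hGW i (hTG i.2)
  let m1 : ℝ → ℝ := O.indicator m
  have hm1 : AEStronglyMeasurable m1 volume :=
    (aestronglyMeasurable_indicator_iff hOo.measurableSet).2 hOm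
  have hO0 : ∀ t ∈ O, 0 < t := by
    intro t ht
    obtain ⟨u, _, hu⟩ := Set.mem_iUnion₂.1 ht
    exact hu.1
  -- agreement
  have hagree : ∀ u, 0 < u → W u ⊆ O →
      (fun y => m (u - y) * k y) =ᵐ[volume.restrict (Set.Ioc 0 u)] fun y => m1 (u - y) * k y := by
    intro u hu hW
    have : ∀ᵐ t ∂(volume.restrict (Set.Ioc 0 u)), t ≠ u :=
      ae_restrict_of_ae (by simp [ae_iff])
    filter_upwards [this, ae_restrict_mem measurableSet_Ioc] with y hy hy'
    have hyu : y < u := lt_of_le_of_ne hy'.2 hy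
    by_cases hky : k y = 0
    · simp [hky]
    · have : u - y ∈ O := hW ⟨by linarith, by linarith [hy'.1], by simpa using hky⟩
      simp only [m1, Set.indicator_of_mem this]
  have hG_iff : ∀ u, 0 < u → (u ∈ G ↔ W u ⊆ O) := by
    intro u hu
    constructor
    · intro h; exact Set.subset_biUnion_of_mem h
    · intro h
      refine ⟨hu, ?_⟩
      rw [intervalIntegrable_iff_integrableOn_Ioc_of_le hu.le]
      obtain ⟨M, hM⟩ := hm_loc u hu
      obtain ⟨C, hC⟩ := (isCompact_Icc (a := 0) (b := u)).exists_bound_of_continuousOn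
        hk.continuousOn
      have hM0 : 0 ≤ M := (abs_nonneg _).trans (hM 0 ⟨by linarith, by linarith⟩)
      refine Integrable.of_bound ?_ (M * C) ?_
      · have : AEStronglyMeasurable (fun y => m1 (u - y) * k y) volume :=
          (hm1.comp_measurePreserving (Measure.measurePreserving_sub_left volume u)).mul
            hk.aestronglyMeasurable
        exact (this.mono_measure Measure.restrict_le_self).congr (hagree u hu h).symm
      · filter_upwards [ae_restrict_mem measurableSet_Ioc] with y hy
        rw [norm_mul]
        exact mul_le_mul (hM _ ⟨by linarith [hy.2], by linarith [hy.1]⟩) (hC _ ⟨hy.1.le, hy.2⟩)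
          (norm_nonneg _) hM0
  have hGm : MeasurableSet G := by
    have e : G = Set.Ioi 0 \ ⋃ t ∈ {t | 0 < t ∧ t ∉ O}, {u | t < u ∧ k (u - t) ≠ 0} := by
      ext u
      constructor
      · intro hu
        refine ⟨hu.1, fun h => ?_⟩
        obtain ⟨t, ht, h1, h2⟩ := Set.mem_iUnion₂.1 h
        exact ht.2 ((hG_iff u hu.1).1 hu ⟨ht.1, h1, h2⟩)
      · rintro ⟨hu, h⟩
        refine (hG_iff u hu).2 fun t ht => ?_
        by_contra hc
        exact h (Set.mem_iUnion₂.2 ⟨t, ⟨ht.1, hc⟩, ht.2.1, ht.2.2⟩)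
    rw [e]
    refine measurableSet_Ioi.diff (IsOpen.measurableSet (isOpen_biUnion fun t _ => ?_))
    exact (isOpen_lt continuous_const continuous_id).inter
        (isOpen_ne_fun (by fun_prop) continuous_const)
  let K : ℝ → ℝ := (Set.Ioi 0).indicator k
  have hK : AEStronglyMeasurable K volume :=
    (hk.measurable.indicator measurableSet_Ioi).aestronglyMeasurable
  have hconv : AEStronglyMeasurable (fun u => ∫ y, K y * m1 (u - y)) volume :=
    (hK.convolution_integrand (ContinuousLinearMap.mul ℝ ℝ) hm1).integral_prod_right'
  have hfin : AEStronglyMeasurable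
      (fun u => G.indicator (fun u => φ * ∫ y, K y * m1 (u - y)) u + v u)
      (volume.restrict (Set.Ioi 0)) := by
    refine AEStronglyMeasurable.add ?_ ?_
    · exact ((hconv.const_mul φ).indicator hGm).mono_measure Measure.restrict_le_self
    · exact (hv.mono Set.Ioi_subset_Ici_self).aestronglyMeasurable measurableSet_Ioi
  refine hfin.congr ?_
  filter_upwards [ae_restrict_mem measurableSet_Ioi] with u hu
  have hu : 0 < u := hu
  rw [hm_eq u hu.le]
  congr 1
  by_cases h : u ∈ G
  · rw [Set.indicator_of_mem h, intervalIntegral.integral_of_le hu.le,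
      integral_congr_ae (hagree u hu ((hG_iff u hu).1 h))]
    congr 1
    rw [← integral_indicator measurableSet_Ioc]
    congr 1
    ext y
    by_cases h0 : 0 < y
    · by_cases h1 : y ≤ u
      · rw [Set.indicator_of_mem (show y ∈ Set.Ioc 0 u from ⟨h0, h1⟩), mul_comm]
        simp only [K]
        rw [Set.indicator_of_mem (show y ∈ Set.Ioi 0 from h0)]
      · rw [Set.indicator_of_notMem (fun hh => h1 hh.2)]
        have : m1 (u - y) = 0 := Set.indicator_of_notMem
          (fun hh => by have := hO0 _ hh; linarith) _
        rw [this, mul_zero]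
    · rw [Set.indicator_of_notMem (fun hh => h0 hh.1)]
      simp only [K]
      rw [Set.indicator_of_notMem (show y ∉ Set.Ioi 0 from h0), zero_mul]
  · rw [Set.indicator_of_notMem h, intervalIntegral.integral_undef (fun hh => h ⟨hu, hh⟩), mul_zero]

lemma c2_extract (g : ℝ → ℝ) (hg : ContDiffOn ℝ 2 g (Set.Ioi 0)) :
    (∀ u, 0 < u → HasDerivAt g (deriv g u) u) ∧
    (∀ u, 0 < u → HasDerivAt (deriv g) (deriv (deriv g) u) u) ∧
    ContinuousOn (deriv (deriv g)) (Set.Ioi 0) := by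
  have h2 : ContDiffOn ℝ (1 + 1) g (Set.Ioi 0) := by convert hg using 1; norm_num
  rw [contDiffOn_succ_iff_deriv_of_isOpen isOpen_Ioi] at h2
  obtain ⟨d1, -, h1⟩ := h2
  have h1' : ContDiffOn ℝ (0 + 1) (deriv g) (Set.Ioi 0) := by simpa using h1
  rw [contDiffOn_succ_iff_deriv_of_isOpen isOpen_Ioi] at h1'
  obtain ⟨d2, -, h0⟩ := h1'
  exact ⟨fun u hu => (d1.differentiableAt (Ioi_mem_nhds hu)).hasDerivAt,
    fun u hu => (d2.differentiableAt (Ioi_mem_nhds hu)).hasDerivAt, h0.continuousOn⟩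

lemma c2_build (g : ℝ → ℝ) (d1 : ∀ u, 0 < u → HasDerivAt g (deriv g u) u)
    (d2 : ∀ u, 0 < u → HasDerivAt (deriv g) (deriv (deriv g) u) u)
    (h : ContinuousOn (deriv (deriv g)) (Set.Ioi 0)) : ContDiffOn ℝ 2 g (Set.Ioi 0) := by
  have h1 : ContDiffOn ℝ (0 + 1) (deriv g) (Set.Ioi 0) := by
    rw [contDiffOn_succ_iff_deriv_of_isOpen isOpen_Ioi]
    exact ⟨fun u hu => (d2 u hu).differentiableAt.differentiableWithinAt, by simp,
      contDiffOn_zero.2 h⟩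
  have h2 : ContDiffOn ℝ (1 + 1) g (Set.Ioi 0) := by
    rw [contDiffOn_succ_iff_deriv_of_isOpen isOpen_Ioi]
    exact ⟨fun u hu => (d1 u hu).differentiableAt.differentiableWithinAt, by simp,
      by simpa using h1⟩
  convert h2 using 1; norm_num

lemma eqOn_pos_deriv {g h : ℝ → ℝ} (H : ∀ u, 0 < u → g u = h u) {u : ℝ} (hu : 0 < u) :
    deriv g u = deriv h u := by
  apply Filter.EventuallyEq.deriv_eq
  filter_upwards [Ioi_mem_nhds hu] with x hx using H x hx

lemma conv_cont (g k : ℝ → ℝ) (hg : Continuous g) (hk : Continuous k) :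
    Continuous fun u => ∫ t in (0:ℝ)..u, g t * k (u - t) := by
  apply intervalIntegral.continuous_parametric_intervalIntegral_of_continuous
    (f := fun u t => g t * k (u - t)) (s := fun u => u)
  · fun_prop
  · fun_prop

lemma flip_int (g k : ℝ → ℝ) (u : ℝ) :
    ∫ y in (0:ℝ)..u, g (u - y) * k y = ∫ t in (0:ℝ)..u, g t * k (u - t) := by
  have := intervalIntegral.integral_comp_sub_left (a := 0) (b := u) (fun t => g t * k (u - t)) u
  simpa using this

/-- for the defective renewal equation
`m(u) = φ ∫₀^u m(u-y) f(y) dy + v(u)` with `0 < φ < 1`, `f` the density of an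
absolutely continuous nonnegative random variable with distribution function `F`
(`F(0) = 0`), `v` locally bounded, `m` the locally bounded solution, and
`F, v ∈ C²₀([0,∞))`: the solution `m` belongs to `C²₀([0,∞))`, `m(0) = v(0)`,
`m'(u) = φ(∫₀^u m(u-y) f'(y) dy + m(u) f(0)) + v'(u)` for `u > 0`, and
`m'(0⁺) = φ v(0) f(0) + v'(0)`. -/
theorem stmt_2 (φ : ℝ) (hφ0 : 0 < φ) (hφ1 : φ < 1)
    (f F v m : ℝ → ℝ)
    (hf_nonneg : ∀ u : ℝ, 0 < u → 0 ≤ f u)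
    (hf_integrable : MeasureTheory.IntegrableOn f (Set.Ioi 0))
    (hf_total : ∫ y in Set.Ioi (0:ℝ), f y = 1)
    (hF_def : ∀ u : ℝ, 0 ≤ u → F u = ∫ y in (0:ℝ)..u, f y)
    (hFf : ∀ u : ℝ, 0 < u → HasDerivAt F (f u) u)
    (hv_loc : ∀ x : ℝ, 0 < x → ∃ M, ∀ u ∈ Set.Icc (0:ℝ) x, |v u| ≤ M)
    (hm_loc : ∀ x : ℝ, 0 < x → ∃ M, ∀ u ∈ Set.Icc (0:ℝ) x, |m u| ≤ M)
    (hm_eq : ∀ u : ℝ, 0 ≤ u →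
      m u = φ * (∫ y in (0:ℝ)..u, m (u - y) * f y) + v u)
    (hF_c : ContinuousOn F (Set.Ici 0)) (hF_cd : ContDiffOn ℝ 2 F (Set.Ioi 0))
    (hF_lim : ∀ k ≤ 2, ∃ L, Tendsto (iteratedDeriv k F) (𝓝[>] (0:ℝ)) (𝓝 L))
    (hv_c : ContinuousOn v (Set.Ici 0)) (hv_cd : ContDiffOn ℝ 2 v (Set.Ioi 0))
    (hv_lim : ∀ k ≤ 2, ∃ L, Tendsto (iteratedDeriv k v) (𝓝[>] (0:ℝ)) (𝓝 L))
    (f0 v'0 : ℝ)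
    (hf0 : Tendsto f (𝓝[>] (0:ℝ)) (𝓝 f0))
    (hv'0 : Tendsto (deriv v) (𝓝[>] (0:ℝ)) (𝓝 v'0)) :
    (ContinuousOn m (Set.Ici 0) ∧ ContDiffOn ℝ 2 m (Set.Ioi 0) ∧
      ∀ k ≤ 2, ∃ L, Tendsto (iteratedDeriv k m) (𝓝[>] (0:ℝ)) (𝓝 L)) ∧
    m 0 = v 0 ∧
    (∀ u : ℝ, 0 < u → deriv m u
        = φ * ((∫ y in (0:ℝ)..u, m (u - y) * deriv f y) + m u * f0) + deriv v u) ∧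
    Tendsto (deriv m) (𝓝[>] (0:ℝ)) (𝓝 (φ * v 0 * f0 + v'0)) := by
  obtain ⟨-, dF2, cF2⟩ := c2_extract F hF_cd
  obtain ⟨dv1, dv2, cv2⟩ := c2_extract v hv_cd
  have hFd : ∀ u, 0 < u → deriv F u = f u := fun u hu => (hFf u hu).deriv
  have hFd2 : ∀ u, 0 < u → deriv (deriv F) u = deriv f u := fun u hu => eqOn_pos_deriv hFd hu
  have df : ∀ u, 0 < u → HasDerivAt f (deriv f u) u := by
    intro u hu
    rw [← hFd2 u hu]
    refine (dF2 u hu).congr_of_eventuallyEq ?_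
    filter_upwards [Ioi_mem_nhds hu] with x hx using (hFd x hx).symm
  have cf : ContinuousOn (deriv f) (Set.Ioi 0) := cF2.congr fun u hu => (hFd2 u hu).symm
  obtain ⟨L, hL⟩ := hF_lim 2 le_rfl
  have hL' : Tendsto (deriv f) (𝓝[>] (0:ℝ)) (𝓝 L) := by
    refine hL.congr' ?_
    filter_upwards [self_mem_nhdsWithin] with u hu
    rw [iteratedDeriv_succ, iteratedDeriv_one, hFd2 u hu]
  obtain ⟨Lv, hLv⟩ := hv_lim 2 le_rfl
  have hLv' : Tendsto (deriv (deriv v)) (𝓝[>] (0:ℝ)) (𝓝 Lv) := by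
    refine hLv.congr' ?_
    filter_upwards with u
    rw [iteratedDeriv_succ, iteratedDeriv_one]
  -- extend `f`
  have hupd : ∀ u, 0 < u → Function.update f 0 f0 u = f u := fun u hu =>
    Function.update_of_ne hu.ne' _ _
  have f1c : ContinuousOn (Function.update f 0 f0) (Set.Ici 0) := by
    intro u hu
    rcases eq_or_lt_of_le (show (0:ℝ) ≤ u from hu) with rfl | hu
    · rw [← continuousWithinAt_Ioi_iff_Ici]
      unfold ContinuousWithinAt
      rw [Function.update_self]
      refine hf0.congr' ?_
      filter_upwards [self_mem_nhdsWithin] with x hx using (hupd x hx).symm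
    · refine ((df u hu).continuousAt.congr ?_).continuousWithinAt
      filter_upwards [Ioi_mem_nhds hu] with x hx using (hupd x hx).symm
  obtain ⟨k, k', hk'c, hkd, hkf, hk'f, hk'0⟩ := ext_C1 (Function.update f 0 f0) (deriv f) f1c
    (fun u hu => (df u hu).congr_of_eventuallyEq (by
      filter_upwards [Ioi_mem_nhds hu] with x hx using hupd x hx)) cf L hL'
  have hk0 : k 0 = f0 := by rw [hkf 0 le_rfl, Function.update_self]
  have hkc : Continuous k := continuous_iff_continuousAt.2 fun u => (hkd u).continuousAt
  have hm_eq1 : ∀ u : ℝ, 0 ≤ u → m u = φ * (∫ y in (0:ℝ)..u, m (u - y) * k y) + v u := by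
    intro u hu
    rw [hm_eq u hu, intervalIntegral.integral_of_le hu, intervalIntegral.integral_of_le hu]
    congr 2
    refine setIntegral_congr_fun measurableSet_Ioc fun y hy => ?_
    simp only [hkf y hy.1.le, hupd y hy.1]
  have hmm := meas_m φ k v m hkc hv_c hm_loc hm_eq1
  have hm_eq2 : ∀ u : ℝ, 0 ≤ u → m u = φ * (∫ t in (0:ℝ)..u, m t * k (u - t)) + v u := by
    intro u hu
    rw [← flip_int]; exact hm_eq1 u hu
  have hmc : ContinuousOn m (Set.Ici 0) := by
    have := (continuousOn_const (c := φ)).mul (cont_conv_aux m k hkc hmm hm_loc) |>.add hv_c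
    exact this.congr fun u hu => hm_eq2 u hu
  have hm0 : m 0 = v 0 := by simpa using hm_eq2 0 le_rfl
  let M : ℝ → ℝ := fun u => m (max u 0)
  have hMc : Continuous M := by
    have : Continuous fun u : ℝ => max u 0 := by fun_prop
    exact hmc.comp_continuous this fun u => Set.mem_Ici.2 (le_max_right _ _)
  have hMm : ∀ u, 0 ≤ u → M u = m u := fun u hu => by simp only [M, max_eq_left hu]
  have hMint : ∀ (q : ℝ → ℝ) (u : ℝ), 0 ≤ u →
      ∫ t in (0:ℝ)..u, M t * q (u - t) = ∫ t in (0:ℝ)..u, m t * q (u - t) := by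
    intro q u hu
    apply intervalIntegral.integral_congr
    intro t ht
    rw [Set.uIcc_of_le hu] at ht
    simp only [hMm t ht.1]
  let m' : ℝ → ℝ := fun u =>
    φ * (M u * k 0 + ∫ t in (0:ℝ)..u, M t * k' (u - t)) + deriv v u
  have hmd : ∀ u, 0 < u → HasDerivAt m (m' u) u := by
    intro u hu
    refine (((leibniz_conv M k k' hMc hk'c hkd u).const_mul φ).add
      (dv1 u hu)).congr_of_eventuallyEq ?_
    filter_upwards [Ioi_mem_nhds hu] with x hx
    have hx : 0 < x := hx
    simp only [Pi.add_apply]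
    rw [hm_eq2 x hx.le, hMint k x hx.le]
  have hQc : Continuous fun u => φ * (M u * k 0 + ∫ t in (0:ℝ)..u, M t * k' (u - t)) :=
    continuous_const.mul ((hMc.mul continuous_const).add (conv_cont M k' hMc hk'c))
  have hm'c : ContinuousOn m' (Set.Ioi 0) :=
    hQc.continuousOn.add fun u hu => (dv2 u hu).continuousAt.continuousWithinAt
  have hm'l : Tendsto m' (𝓝[>] (0:ℝ)) (𝓝 (φ * v 0 * f0 + v'0)) := by
    have := ((hQc.tendsto 0).mono_left (nhdsWithin_le_nhds (s := Set.Ioi 0))).add hv'0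
    simp only [intervalIntegral.integral_same, hMm 0 le_rfl, hm0, hk0, add_zero, ← mul_assoc]
      at this
    exact this.congr fun u => by simp only [m', hk0, mul_assoc]
  have hdm : ∀ u, 0 < u → deriv m u = m' u := fun u hu => (hmd u hu).deriv
  have hdml : Tendsto (deriv m) (𝓝[>] (0:ℝ)) (𝓝 (φ * v 0 * f0 + v'0)) := by
    refine hm'l.congr' ?_
    filter_upwards [self_mem_nhdsWithin] with u hu using (hdm u hu).symm
  -- extend `m`
  obtain ⟨n, n', hn'c, hnd, hnm, hn'm, hn'0⟩ := ext_C1 m m' hmc hmd hm'c _ hm'l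
  let Q2 : ℝ → ℝ := fun u =>
    φ * (n' u * k 0 + (k' u * n 0 + ∫ t in (0:ℝ)..u, k' t * n' (u - t)))
  have hQ2c : Continuous Q2 := continuous_const.mul ((hn'c.mul continuous_const).add
    ((hk'c.mul continuous_const).add (conv_cont k' n' hk'c hn'c)))
  have hm'n : ∀ u, 0 < u →
      m' u = φ * (n u * k 0 + ∫ t in (0:ℝ)..u, k' t * n (u - t)) + deriv v u := by
    intro u hu
    simp only [m']
    rw [hMm u hu.le, hnm u hu.le, ← flip_int]
    congr 3
    apply intervalIntegral.integral_congr
    intro t ht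
    rw [Set.uIcc_of_le hu.le] at ht
    have : 0 ≤ u - t := by linarith [ht.2]
    simp only [hMm _ this, hnm _ this, mul_comm]
  have hm'd : ∀ u, 0 < u → HasDerivAt (deriv m) (Q2 u + deriv (deriv v) u) u := by
    intro u hu
    refine ((((hnd u).mul_const (k 0)).add (leibniz_conv k' n n' hk'c hn'c hnd u)).const_mul φ
      |>.add (dv2 u hu)).congr_of_eventuallyEq ?_
    filter_upwards [Ioi_mem_nhds hu] with x hx
    rw [hdm x hx, hm'n x hx]
    rfl
  have hddm : ∀ u, 0 < u → deriv (deriv m) u = Q2 u + deriv (deriv v) u :=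
    fun u hu => (hm'd u hu).deriv
  refine ⟨⟨hmc, c2_build m (fun u hu => by rw [hdm u hu]; exact hmd u hu)
    (fun u hu => by rw [hddm u hu]; exact hm'd u hu)
    ((hQ2c.continuousOn.add cv2).congr fun u hu => hddm u hu), ?_⟩, hm0, ?_, hdml⟩
  · intro j hj
    interval_cases j
    · refine ⟨m 0, ?_⟩
      rw [iteratedDeriv_zero]
      exact (hmc 0 Set.self_mem_Ici).mono_left (nhdsWithin_mono _ Set.Ioi_subset_Ici_self)
    · rw [iteratedDeriv_one]
      exact ⟨_, hdml⟩
    · refine ⟨Q2 0 + Lv, ?_⟩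
      refine (((hQ2c.tendsto 0).mono_left (nhdsWithin_le_nhds (s := Set.Ioi 0))).add hLv').congr' ?_
      filter_upwards [self_mem_nhdsWithin] with u hu
      rw [iteratedDeriv_succ, iteratedDeriv_one, hddm u hu]
  · intro u hu
    rw [hdm u hu]
    simp only [m']
    rw [hMint k' u hu.le, hMm u hu.le, hk0, ← flip_int, add_comm (m u * f0)]
    congr 3
    rw [intervalIntegral.integral_of_le hu.le, intervalIntegral.integral_of_le hu.le]
    refine setIntegral_congr_fun measurableSet_Ioc fun y hy => ?_
    simp only [hk'f y hy.1]
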